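/- For every (x,y) ∈ [0,1]², the value u(x,y) satisfies the two-sided bound 1 − √((1−x)² + (1−y)²) ≤ u(x,y) ≤ min{x, y}. -/

import Mathlib

open Real Set Topology Filter

/-- `mIdx n = 4(n+1) - 2 = 4n + 2`, the odd-indexed frequencies `2, 6, 10, …`. -/
def mIdx (n : ℕ) : ℕ := 4 * n + 2

/-- `W(r,θ) = (8/π) ∑_{n≥1} r^{mₙ²} sin(mₙ θ) / ((mₙ² − 1) mₙ)` with `mₙ = 4n − 2`. -/
noncomputable def W (r θ : ℝ) : ℝ :=
  (8 / π) * ∑' n : ℕ,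
    r ^ (mIdx n ^ 2) * Real.sin ((mIdx n : ℝ) * θ) / (((mIdx n : ℝ) ^ 2 - 1) * (mIdx n : ℝ))

/-- The minimax formula `u(x,y) = min_{θ∈[0,π/2]} max_{r∈[0,1]} ( r(x cos θ + y sin θ) − W(r,θ) )`.
(The extrema are attained, so `⨅`/`⨆` over the compact index sets agree with min/max.) -/
noncomputable def u (x y : ℝ) : ℝ :=
  ⨅ θ : Icc (0 : ℝ) (π / 2), ⨆ r : Icc (0 : ℝ) 1,
    ((r : ℝ) * (x * Real.cos (θ : ℝ) + y * Real.sin (θ : ℝ)) - W (r : ℝ) (θ : ℝ))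

/-!
At `r = 1` the series collapses: `W 1 θ = cos θ + sin θ - 1` on `[0, π/2]`. Hence the value at
`r = 1` of the function maximised over `r` is
`1 - ((1 - x) cos θ + (1 - y) sin θ)`, which by Cauchy–Schwarz is at least
`1 - √((1 - x)² + (1 - y)²)`, for every `θ`; this is the lower bound. For the upper bound,
`W r 0 = W r (π/2) = 0`, so `θ = 0` and `θ = π/2` give the maxima `x` and `y`.

The closed form (`W_one`) comes from the Fourier series of `sin (π x)` on `[0, 1)`, extended with
period `1` (`hasSum_sin_pi`). Subtracting it at `x = θ/π` from the same series at `x = θ/π + 1/2`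
kills the even frequencies and leaves
`cos θ - sin θ = (8/π) ∑ cos (mₙ θ) / (mₙ² - 1)` on `(0, π/2)` (`hasSum_cos_mIdx`).
The right side is the termwise derivative of `W 1`, and `W 1 0 = 0`, so `W 1` is determined by the
mean value theorem.

As `⨅` and `⨆` over the reals are only meaningful for bounded families, the uniform bound
`abs_W_le` on `W` is needed too.
-/

/-! ### The Fourier series of `|sin|` -/

theorem fourierCoeffOn_sin_pi (k : ℤ) :
    fourierCoeffOn (zero_lt_one' ℝ) (fun x : ℝ => (Real.sin (π * x) : ℂ)) k
      = ((2 / (π * (1 - 4 * (k : ℝ) ^ 2)) : ℝ) : ℂ) := by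
  rw [fourierCoeffOn_eq_integral]
  have hk : (1 - 4 * (k : ℂ) ^ 2) ≠ 0 := by
    have : (1 - 4 * k ^ 2 : ℤ) ≠ 0 := by omega
    exact_mod_cast this
  have hpi : (π : ℂ) ≠ 0 := by exact_mod_cast Real.pi_ne_zero
  -- `exp (c x) sin (π x)` has the explicit antiderivative
  -- `exp (c x) (c sin (π x) - π cos (π x)) / (c² + π²)`.
  set c : ℂ := -2 * π * Complex.I * k with hc
  have hD : c ^ 2 + (π : ℂ) ^ 2 = π ^ 2 * (1 - 4 * (k : ℂ) ^ 2) := by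
    rw [hc]; ring_nf; rw [Complex.I_sq]; ring
  have hD0 : c ^ 2 + (π : ℂ) ^ 2 ≠ 0 := by
    rw [hD]; exact mul_ne_zero (pow_ne_zero _ hpi) hk
  have key : ∀ x ∈ uIcc (0 : ℝ) 1, HasDerivAt
      (fun x : ℝ => Complex.exp (c * x) * (c * Complex.sin (π * x) - π * Complex.cos (π * x))
        / (c ^ 2 + (π : ℂ) ^ 2))
      (Complex.exp (c * x) * Complex.sin (π * x)) x := by
    intro x _
    have h1 : HasDerivAt (fun z : ℂ => Complex.exp (c * z) *
        (c * Complex.sin (π * z) - π * Complex.cos (π * z)) / (c ^ 2 + (π : ℂ) ^ 2))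
        (Complex.exp (c * x) * Complex.sin (π * x)) (x : ℂ) := by
      have hl : ∀ a : ℂ, HasDerivAt (fun z : ℂ => a * z) a (x : ℂ) := fun a => by
        simpa using (hasDerivAt_id (x : ℂ)).const_mul a
      convert! ((hl c).cexp.mul (((hl π).csin.const_mul c).sub
        ((hl π).ccos.const_mul (π : ℂ)))).div_const (c ^ 2 + (π : ℂ) ^ 2) using 1
      simp only [Pi.sub_apply]
      field_simp
      ring
    exact h1.comp_ofReal
  have hint := intervalIntegral.integral_eq_sub_of_hasDerivAt key
    (Continuous.intervalIntegrable (by fun_prop) _ _)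
  have hexp : Complex.exp c = 1 := by
    rw [Complex.exp_eq_one_iff]
    exact ⟨-k, by rw [hc]; push_cast; ring⟩
  have : ∀ x : ℝ, fourier (-k) (x : AddCircle ((1 : ℝ) - 0)) • (Real.sin (π * x) : ℂ)
      = Complex.exp (c * x) * Complex.sin (π * x) := by
    intro x
    rw [fourier_coe_apply, smul_eq_mul, hc]
    push_cast
    congr 2
    ring
  simp_rw [this]
  rw [hint]
  simp [hexp, hD]
  field_simp
  ring

theorem summable_coeff_sin_pi : Summable (fun k : ℤ => ((2 / (π * (1 - 4 * (k : ℝ) ^ 2)) : ℝ))) := by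
  have h := (Real.summable_one_div_int_pow (p := 2)).2 (by norm_num)
  refine Summable.of_norm_bounded_eventually (g := fun k : ℤ => 1 / (k : ℝ) ^ 2) h ?_
  rw [Filter.eventually_cofinite]
  refine (Set.finite_singleton (0 : ℤ)).subset ?_
  intro k hk
  by_contra h0
  apply hk
  have h0 : k ≠ 0 := h0
  have h1 : (1 : ℝ) ≤ (k : ℝ) ^ 2 := by
    have : 1 ≤ k ^ 2 := by have := sq_pos_of_ne_zero h0; omega
    exact_mod_cast this
  have := Real.pi_gt_three
  rw [norm_div, Real.norm_eq_abs, Real.norm_eq_abs, abs_mul, abs_of_neg (by linarith : 1 - 4 * (k : ℝ) ^ 2 < 0),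
    abs_of_pos Real.pi_pos, abs_of_pos two_pos,
    div_le_div_iff₀ (by nlinarith) (by linarith)]
  nlinarith

/-- The Fourier series of period `1` of `sin (π x)`. It converges pointwise because the periodic
extension is continuous (`sin` vanishes at `0` and `π`) and the coefficients are summable. -/
theorem hasSum_sin_pi {x : ℝ} (hx : x ∈ Ico (0 : ℝ) 1) :
    HasSum (fun k : ℤ => 2 / (π * (1 - 4 * (k : ℝ) ^ 2)) * Real.cos (2 * π * k * x))
      (Real.sin (π * x)) := by
  have hcont : Continuous (AddCircle.liftIco (1 : ℝ) 0 (fun x : ℝ => (Real.sin (π * x) : ℂ))) := by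
    apply AddCircle.liftIco_zero_continuous
    · simp
    · fun_prop
  let F : C(AddCircle (1 : ℝ), ℂ) := ⟨_, hcont⟩
  have hco : fourierCoeff F = fun k : ℤ => ((2 / (π * (1 - 4 * (k : ℝ) ^ 2)) : ℝ) : ℂ) := by
    ext k
    rw [← fourierCoeffOn_sin_pi k]
    have h := fourierCoeff_liftIco_eq (T := 1) (a := 0) (fun x : ℝ => (Real.sin (π * x) : ℂ)) k
    simp only [zero_add] at h
    exact h
  have hs : Summable (fourierCoeff F) := by
    rw [hco]; exact Complex.ofRealCLM.summable summable_coeff_sin_pi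
  have h := has_pointwise_sum_fourier_series_of_summable hs (x : AddCircle (1 : ℝ))
  have hF : F (x : AddCircle (1 : ℝ)) = (Real.sin (π * x) : ℂ) :=
    AddCircle.liftIco_zero_coe_apply (f := fun x : ℝ => (Real.sin (π * x) : ℂ)) hx
  rw [hF, hco] at h
  have h2 := Complex.reCLM.hasSum h
  simp only [Complex.reCLM_apply, Complex.ofReal_re] at h2
  convert h2 using 2 with k
  rw [smul_eq_mul, Complex.re_ofReal_mul, fourier_coe_apply]
  congr 1
  rw [← Complex.exp_ofReal_mul_I_re]
  congr 2
  push_cast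
  ring

/-! ### The function `W` -/

/-- The termwise derivative of `W 1`, up to the factor `8 / π`. -/
theorem hasSum_cos_mIdx {θ : ℝ} (hθ : θ ∈ Ioo (0 : ℝ) (π / 2)) :
    HasSum (fun n : ℕ => Real.cos ((mIdx n : ℝ) * θ) / ((mIdx n : ℝ) ^ 2 - 1))
      (π / 8 * (Real.cos θ - Real.sin θ)) := by
  have hpi := Real.pi_pos
  have hx : θ / π < 1 / 2 := by rw [div_lt_iff₀ hpi]; linarith [hθ.2]
  have hx0 : 0 < θ / π := div_pos hθ.1 hpi
  have h1 := hasSum_sin_pi (x := θ / π) ⟨hx0.le, by linarith⟩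
  have h2 := hasSum_sin_pi (x := θ / π + 1 / 2) ⟨by linarith, by linarith⟩
  have e1 : π * (θ / π) = θ := by field_simp
  have e2 : π * (θ / π + 1 / 2) = θ + π / 2 := by field_simp
  rw [e1] at h1
  rw [e2, Real.sin_add_pi_div_two] at h2
  have h3 := ((h2.sub h1).nat_add_neg).mul_left (π / 8)
  have a1 : ∀ k : ℤ, Real.cos (2 * π * k * (θ / π)) = Real.cos (2 * k * θ) := fun k => by
    congr 1; field_simp
  have a2 : ∀ k : ℤ, Real.cos (2 * π * k * (θ / π + 1 / 2))
      = (-1) ^ k * Real.cos (2 * k * θ) := fun k => by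
    rw [← Real.cos_add_int_mul_pi]; congr 1; field_simp
  simp only [a1, a2] at h3
  -- Terms of even index vanish, and the odd index `2 n + 1` has frequency `mIdx n`.
  have hinj : Function.Injective (fun j : ℕ => 2 * j + 1) := fun a b h => by
    simpa using h
  have h4 := (hinj.hasSum_iff (f := fun n : ℕ => _) (fun n hn => ?_)).2 h3
  · convert! h4 using 1
    · ext n
      have hm : ((mIdx n : ℕ) : ℝ) = 4 * n + 2 := by simp [mIdx]
      have hd : (4 * (n : ℝ) + 2) ^ 2 - 1 ≠ 0 := by nlinarith [(Nat.cast_nonneg n : (0:ℝ) ≤ n)]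
      have h' : Odd (2 * (n : ℤ) + 1) := ⟨n, rfl⟩
      simp only [Function.comp]
      push_cast
      rw [Odd.neg_one_zpow h', Odd.neg_one_zpow h'.neg, hm]
      have c1 : Real.cos (2 * (-(2 * (n : ℝ) + 1)) * θ) = Real.cos ((4 * n + 2) * θ) := by
        rw [← Real.cos_neg]; congr 1; ring
      have c2 : Real.cos (2 * (2 * (n : ℝ) + 1) * θ) = Real.cos ((4 * n + 2) * θ) := by
        congr 1; ring
      have d1 : 1 - 4 * (2 * (n : ℝ) + 1) ^ 2 = -((4 * (n : ℝ) + 2) ^ 2 - 1) := by ring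
      have d2 : 1 - 4 * (-(2 * (n : ℝ) + 1)) ^ 2 = -((4 * (n : ℝ) + 2) ^ 2 - 1) := by ring
      rw [c1, c2, d1, d2]
      generalize (4 * (n : ℝ) + 2) ^ 2 - 1 = D at hd ⊢
      field_simp
      ring
    · simp
  · have : Even n := by
      by_contra h
      rw [Nat.not_even_iff_odd] at h
      obtain ⟨j, rfl⟩ := h
      exact hn ⟨j, rfl⟩
    have h' : Even (n : ℤ) := by exact_mod_cast this
    simp [h'.neg_one_zpow, h'.neg.neg_one_zpow]

theorem mIdx_bound (n : ℕ) : ((n : ℝ) + 1) ^ 2 ≤ (mIdx n : ℝ) ^ 2 - 1 ∧ (2 : ℝ) ≤ mIdx n := by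
  have hm : ((mIdx n : ℕ) : ℝ) = 4 * n + 2 := by simp [mIdx]
  have hn : (0 : ℝ) ≤ n := Nat.cast_nonneg n
  rw [hm]
  constructor <;> nlinarith

theorem summable_bound : Summable (fun n : ℕ => 1 / ((n : ℝ) + 1) ^ 2) := by
  have h := (Real.summable_one_div_nat_pow (p := 2)).2 (by norm_num)
  simpa using (summable_nat_add_iff 1).2 h

theorem norm_W_term_le {r : ℝ} (hr : r ∈ Icc (0 : ℝ) 1) (θ : ℝ) (n : ℕ) :
    ‖r ^ (mIdx n ^ 2) * Real.sin ((mIdx n : ℝ) * θ) / (((mIdx n : ℝ) ^ 2 - 1) * (mIdx n : ℝ))‖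
      ≤ 1 / ((n : ℝ) + 1) ^ 2 := by
  obtain ⟨h1, h2⟩ := mIdx_bound n
  have hp : (0 : ℝ) < ((n : ℝ) + 1) ^ 2 := by positivity
  rw [norm_div, norm_mul, Real.norm_eq_abs, Real.norm_eq_abs, Real.norm_eq_abs,
    abs_of_nonneg (pow_nonneg hr.1 _),
    abs_of_pos (by nlinarith : 0 < ((mIdx n : ℝ) ^ 2 - 1) * (mIdx n : ℝ))]
  apply div_le_div₀ zero_le_one _ hp (by nlinarith)
  exact mul_le_one₀ (pow_le_one₀ hr.1 hr.2) (abs_nonneg _) (Real.abs_sin_le_one _)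

theorem abs_W_le {r : ℝ} (hr : r ∈ Icc (0 : ℝ) 1) (θ : ℝ) :
    |W r θ| ≤ 8 / π * ∑' n : ℕ, 1 / ((n : ℝ) + 1) ^ 2 := by
  have hpi := Real.pi_pos
  rw [W, abs_mul, abs_of_pos (by positivity : 0 < 8 / π)]
  gcongr
  exact tsum_of_norm_bounded summable_bound.hasSum (norm_W_term_le hr θ)

theorem W_one_hasDerivAt {θ : ℝ} (hθ : θ ∈ Ioo (0 : ℝ) (π / 2)) :
    HasDerivAt (W 1) (Real.cos θ - Real.sin θ) θ := by
  have h := (hasDerivAt_tsum (𝕜 := ℝ) (y₀ := (0 : ℝ)) summable_bound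
    (g := fun n θ => (1 : ℝ) ^ (mIdx n ^ 2) * Real.sin ((mIdx n : ℝ) * θ)
      / (((mIdx n : ℝ) ^ 2 - 1) * (mIdx n : ℝ)))
    (g' := fun n θ => Real.cos ((mIdx n : ℝ) * θ) / ((mIdx n : ℝ) ^ 2 - 1)) ?_ ?_ ?_ θ).const_mul
      (8 / π)
  · rw [(hasSum_cos_mIdx hθ).tsum_eq] at h
    have e : 8 / π * (π / 8 * (Real.cos θ - Real.sin θ)) = Real.cos θ - Real.sin θ := by
      field_simp [Real.pi_ne_zero]
    rwa [e] at h
  · intro n y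
    obtain ⟨h1, h2⟩ := mIdx_bound n
    have hd : (mIdx n : ℝ) ^ 2 - 1 ≠ 0 := (lt_of_lt_of_le (by positivity) h1).ne'
    have hm : (mIdx n : ℝ) ≠ 0 := by linarith
    have hl : HasDerivAt (fun z : ℝ => (mIdx n : ℝ) * z) (mIdx n : ℝ) y := by
      simpa using (hasDerivAt_id y).const_mul (mIdx n : ℝ)
    convert! (hl.sin.const_mul ((1 : ℝ) ^ (mIdx n ^ 2))).div_const
      (((mIdx n : ℝ) ^ 2 - 1) * (mIdx n : ℝ)) using 1
    rw [one_pow, one_mul]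
    field_simp
  · intro n y
    obtain ⟨h1, h2⟩ := mIdx_bound n
    have hp : (0 : ℝ) < ((n : ℝ) + 1) ^ 2 := by positivity
    rw [norm_div, Real.norm_eq_abs, Real.norm_eq_abs, abs_of_pos (hp.trans_le h1)]
    exact div_le_div₀ zero_le_one (Real.abs_cos_le_one _) hp h1
  · simp

theorem W_one_continuous : Continuous (W 1) :=
  continuous_const.mul (continuous_tsum (fun n => by fun_prop) summable_bound
    (fun n θ => norm_W_term_le ⟨zero_le_one, le_rfl⟩ θ n))

theorem W_one {θ : ℝ} (hθ : θ ∈ Icc (0 : ℝ) (π / 2)) : W 1 θ = Real.cos θ + Real.sin θ - 1 := by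
  have h : ∀ t ∈ Icc (0 : ℝ) (π / 2),
      W 1 t - (Real.cos t + Real.sin t - 1) = W 1 0 - (Real.cos 0 + Real.sin 0 - 1) := by
    intro t ht
    rcases ht.1.eq_or_lt with rfl | h0
    · rfl
    obtain ⟨c, hc, e⟩ := exists_hasDerivAt_eq_slope
      (fun t => W 1 t - (Real.cos t + Real.sin t - 1))
      (fun t => (Real.cos t - Real.sin t) - (-Real.sin t + Real.cos t)) h0
      (W_one_continuous.sub (by fun_prop)).continuousOn
      (fun s hs => (W_one_hasDerivAt ⟨hs.1, hs.2.trans_le ht.2⟩).sub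
        (((Real.hasDerivAt_cos s).add (Real.hasDerivAt_sin s)).sub_const 1))
    rw [eq_div_iff (by linarith)] at e
    linarith
  have := h θ hθ
  have h0 : W 1 0 = 0 := by simp [W]
  rw [h0] at this
  simp at this
  linarith

theorem W_zero_left (θ : ℝ) : W 0 θ = 0 := by
  simp [W, mIdx]

theorem W_zero_right (r : ℝ) : W r 0 = 0 := by
  simp [W]

theorem W_pi_div_two (r : ℝ) : W r (π / 2) = 0 := by
  have : ∀ n : ℕ, Real.sin ((mIdx n : ℝ) * (π / 2)) = 0 := fun n => by
    have e : (mIdx n : ℝ) * (π / 2) = ((2 * n + 1 : ℕ) : ℝ) * π := by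
      simp only [mIdx]; push_cast; ring
    rw [e, Real.sin_nat_mul_pi]
  simp [W, this]

theorem bddAbove_inner {x y : ℝ} (hx : x ∈ Icc (0 : ℝ) 1) (hy : y ∈ Icc (0 : ℝ) 1) (θ : ℝ) :
    BddAbove (range fun r : Icc (0 : ℝ) 1 =>
      ((r : ℝ) * (x * Real.cos θ + y * Real.sin θ) - W (r : ℝ) θ)) := by
  refine ⟨2 + 8 / π * ∑' n : ℕ, 1 / ((n : ℝ) + 1) ^ 2, ?_⟩
  rintro _ ⟨r, rfl⟩
  have hW := (abs_le.1 (abs_W_le r.2 θ)).1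
  have h1 : x * Real.cos θ ≤ 1 := by nlinarith [hx.1, hx.2, Real.cos_le_one θ]
  have h2 : y * Real.sin θ ≤ 1 := by nlinarith [hy.1, hy.2, Real.sin_le_one θ]
  have h3 : (r : ℝ) * (x * Real.cos θ + y * Real.sin θ) ≤ 2 := by
    nlinarith [r.2.1, r.2.2]
  show (r : ℝ) * _ - _ ≤ _
  linarith

/-- `1 − √((1−x)² + (1−y)²) ≤ u(x,y) ≤ min{x,y}` on `[0,1]²`. -/
theorem stmt5 (x y : ℝ) (hx : x ∈ Icc (0 : ℝ) 1) (hy : y ∈ Icc (0 : ℝ) 1) :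
    1 - Real.sqrt ((1 - x) ^ 2 + (1 - y) ^ 2) ≤ u x y ∧ u x y ≤ min x y := by
  have hpi := Real.pi_pos
  have hbdd : BddBelow (range fun θ : Icc (0 : ℝ) (π / 2) => ⨆ r : Icc (0 : ℝ) 1,
      ((r : ℝ) * (x * Real.cos (θ : ℝ) + y * Real.sin (θ : ℝ)) - W (r : ℝ) (θ : ℝ))) := by
    refine ⟨0, ?_⟩
    rintro _ ⟨θ, rfl⟩
    refine le_trans ?_ (le_ciSup (bddAbove_inner hx hy θ) ⟨0, by simp⟩)
    simp [W_zero_left]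
  have : Nonempty (Icc (0 : ℝ) (π / 2)) := ⟨⟨0, by simp; positivity⟩⟩
  refine ⟨le_ciInf fun θ => ?_, le_min ?_ ?_⟩
  · refine le_trans ?_ (le_ciSup (bddAbove_inner hx hy θ) ⟨1, by simp⟩)
    simp only [W_one θ.2]
    -- Cauchy–Schwarz for `(1 - x, 1 - y)` and `(cos θ, sin θ)`
    have hcs : (1 - x) * Real.cos θ + (1 - y) * Real.sin θ
        ≤ Real.sqrt ((1 - x) ^ 2 + (1 - y) ^ 2) := by
      apply Real.le_sqrt_of_sq_le
      nlinarith [Real.sin_sq_add_cos_sq (θ : ℝ),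
        sq_nonneg ((1 - x) * Real.sin θ - (1 - y) * Real.cos θ)]
    linarith
  · refine (ciInf_le hbdd ⟨0, by simp; positivity⟩).trans (ciSup_le fun r => ?_)
    simp only [W_zero_right, Real.cos_zero, Real.sin_zero]
    nlinarith [r.2.1, r.2.2, hx.1]
  · refine (ciInf_le hbdd ⟨π / 2, by simp; positivity⟩).trans (ciSup_le fun r => ?_)
    simp only [W_pi_div_two, Real.cos_pi_div_two, Real.sin_pi_div_two]
    nlinarith [r.2.1, r.2.2, hy.1]
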